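/- The natural action of G on the Hilbert bundle L²(G) = E_{P_G}, given by (gξ)(h) = ξ(g^{-1}h) for ξ ∈ L²(G^{s(g)}, λ^{s(g)}) and h ∈ G^{r(g)}, is continuous on G∗L²(G); hence L²(G) is a G-Hilbert bundle and P_G is a G-Hilbert module. -/

import Mathlib

/-! Left translation on `C_c(G)` extends to a continuous unitary action of `G` on `L²(G)`.

*Fibers.* `fiberIdeal Y P y` is an algebraic span, with no closure taken. Completeness of `P` makes
it closed: if `⟨p,p⟩(y) = 0` then `p = q·f` with `f = ⟨p,p⟩^{1/4}`, which vanishes at `y`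
(`mem_fiberIdeal_of_re_eq_zero`). Hence `P / I_y P` is a Banach space for the quotient norm, and a
cutoff argument identifies this norm with `⟨p,p⟩(y)^{1/2}` (`norm_fibMk`), thus with `fibNormQ`.

*The operators.* For `F ∈ C_c(G)` the translate `h ↦ F(g⁻¹h)` is defined on the closed set
`G^{r(g)}` and extends to an element of `C_c(G)` by Tietze's theorem (`exists_translate`). By left
invariance of the Haar system, translation is isometric from the image of `C_c(G)` in the fiber at
`s(g)` to the fiber at `r(g)`. These images are dense, so translation extends to a linear isometry
`actL d g`, surjective because translation by `g⁻¹` inverts it on `C_c(G)`. The unit and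
multiplication laws hold on the dense image of `C_c(G)`, hence everywhere.

*Continuity.* Let `F'` be the translate of `F` along `g₀`. As `g → g₀`, the function
`h ↦ F(h) - F'(gh)` on `G^{s(g)}` tends to `0` uniformly and is supported in a fixed compact set,
whose measure under `λ^{s(g)}` stays bounded by continuity of the Haar system. So the distance in
the fiber at `r(g)` from `g·F` to `F'` tends to `0` (`eventually_norm_actL_sub_lt`). Since the
action is isometric and sections from `C_c(G)` are dense in each fiber, a three-`ε` argument gives
continuity on the whole bundle (`exists_nhds_actL`, `actL_continuous`).
-/

noncomputable section
open scoped ZeroAtInfty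
open Topology Filter ComplexConjugate

namespace Stabilization

/-- The set of continuous sections vanishing at infinity of a family of normed fibers,
relative to a given topology on the total space of the bundle. -/
def C0Sections {Y : Type} [TopologicalSpace Y] (H : Y → Type)
    [∀ y, NormedAddCommGroup (H y)] (tE : TopologicalSpace ((y : Y) × H y)) :
    Set ((y : Y) → H y) :=
  {F | @Continuous Y ((y : Y) × H y) _ tE (fun y => ⟨y, F y⟩) ∧
    Tendsto (fun y => ‖F y‖) (cocompact Y) (nhds 0)}

/-- A Hilbert bundle over `Y` (Definition 2.1 of the paper): a family of Hilbert spaces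
`H y` together with a second countable topology on the total space such that
(i) fiberwise addition and scalar multiplication are continuous, (ii) the norm along any
continuous section vanishing at infinity is continuous, (iii) the continuous sections
vanishing at infinity fill out every fiber, and (iv) the sets `U_{F,ε}` form a base. -/
structure HilbertBundle (Y : Type) [TopologicalSpace Y] where
  H : Y → Type
  [nacg : ∀ y, NormedAddCommGroup (H y)]
  [ips : ∀ y, InnerProductSpace ℂ (H y)]
  [cpl : ∀ y, CompleteSpace (H y)]
  topE : TopologicalSpace ((y : Y) × H y)
  secondCountable : @SecondCountableTopology ((y : Y) × H y) topE
  add_cont : @Continuous {p : ((y : Y) × H y) × ((y : Y) × H y) // p.1.1 = p.2.1}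
      ((y : Y) × H y)
      (@instTopologicalSpaceSubtype _ _ (@instTopologicalSpaceProd _ _ topE topE)) topE
      (fun p => ⟨p.1.1.1, p.1.1.2 + cast (congrArg H p.2).symm p.1.2.2⟩)
  smul_cont : @Continuous (ℂ × (y : Y) × H y) ((y : Y) × H y)
      (@instTopologicalSpaceProd _ _ _ topE) topE
      (fun p => ⟨p.2.1, p.1 • p.2.2⟩)
  norm_cont : ∀ F ∈ C0Sections H topE, Continuous fun y => ‖F y‖
  fiber_full : ∀ (y : Y) (v : H y), ∃ F ∈ C0Sections H topE, F y = v
  isBasis : @TopologicalSpace.IsTopologicalBasis ((y : Y) × H y) topE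
      {S | ∃ (U : Set Y) (F : (y : Y) → H y) (ε : ℝ), IsOpen U ∧ F ∈ C0Sections H topE ∧
        0 < ε ∧ S = {e | e.1 ∈ U ∧ ‖e.2 - F e.1‖ < ε}}

attribute [instance] HilbertBundle.nacg HilbertBundle.ips HilbertBundle.cpl

/-- A Hilbert `C₀(Y)`-module structure on `P`: a right `C₀(Y)`-module action and a
`C₀(Y)`-valued inner product, complete for the norm `‖p‖ = ‖⟨p,p⟩‖^{1/2}` (completeness
being recorded by a `CompleteSpace` instance on `P` at use sites). -/
class HilbertCzeroModule (Y : Type) [TopologicalSpace Y] (P : Type)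
    [NormedAddCommGroup P] [NormedSpace ℂ P] where
  msmul : P → C₀(Y, ℂ) → P
  minner : P → P → C₀(Y, ℂ)
  msmul_add_left : ∀ (p q : P) (f : C₀(Y, ℂ)), msmul (p + q) f = msmul p f + msmul q f
  msmul_add_right : ∀ (p : P) (f g : C₀(Y, ℂ)), msmul p (f + g) = msmul p f + msmul p g
  msmul_mul : ∀ (p : P) (f g : C₀(Y, ℂ)), msmul (msmul p f) g = msmul p (f * g)
  msmul_csmul_left : ∀ (c : ℂ) (p : P) (f : C₀(Y, ℂ)), msmul (c • p) f = c • msmul p f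
  msmul_csmul_right : ∀ (c : ℂ) (p : P) (f : C₀(Y, ℂ)), msmul p (c • f) = c • msmul p f
  minner_add_right : ∀ p q r : P, minner p (q + r) = minner p q + minner p r
  minner_conj : ∀ p q : P, minner p q = star (minner q p)
  minner_csmul_right : ∀ (c : ℂ) (p q : P), minner p (c • q) = c • minner p q
  minner_msmul_right : ∀ (p q : P) (f : C₀(Y, ℂ)), minner p (msmul q f) = minner p q * f
  minner_self_re_nonneg : ∀ (p : P) (y : Y), 0 ≤ (minner p p y).re
  minner_self_im : ∀ (p : P) (y : Y), (minner p p y).im = 0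
  norm_eq : ∀ p : P, ‖p‖ = Real.sqrt ‖minner p p‖

/-- The module action, with the base space explicit. -/
def modSMul (Y : Type) [TopologicalSpace Y] {P : Type} [NormedAddCommGroup P]
    [NormedSpace ℂ P] [HilbertCzeroModule Y P] (p : P) (f : C₀(Y, ℂ)) : P :=
  HilbertCzeroModule.msmul p f

/-- The `C₀(Y)`-valued inner product, with the base space explicit. -/
def modIP (Y : Type) [TopologicalSpace Y] {P : Type} [NormedAddCommGroup P]
    [NormedSpace ℂ P] [HilbertCzeroModule Y P] (p q : P) : C₀(Y, ℂ) :=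
  HilbertCzeroModule.minner p q

variable (Y : Type) [TopologicalSpace Y]
variable (P : Type) [NormedAddCommGroup P] [NormedSpace ℂ P] [HilbertCzeroModule Y P]

/-- `I_y P`: the closed submodule generated by products `p·f` with `f(y) = 0`. -/
def fiberIdeal (y : Y) : Submodule ℂ P :=
  Submodule.span ℂ {x | ∃ (f : C₀(Y, ℂ)) (p : P), f y = 0 ∧ x = modSMul Y p f}

/-- The fiber `P_y = P / I_y P` of the Hilbert bundle associated to `P`. -/
abbrev Fib (y : Y) : Type := P ⧸ fiberIdeal Y P y

/-- `p ↦ p̂(y)`, the image of `p` in the fiber `P_y`. -/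
def fibMk (y : Y) : P → Fib Y P y := Submodule.Quotient.mk

/-- The fiber norm of `p̂(y)`, computed from a representative. -/
def fibNormRep (y : Y) (p : P) : ℝ := Real.sqrt ((modIP Y p p) y).re

/-- The norm on the fiber `P_y` (the common value of `fibNormRep` over representatives). -/
def fibNormQ (y : Y) (h : Fib Y P y) : ℝ :=
  sInf {r | ∃ p : P, h = fibMk Y P y p ∧ r = fibNormRep Y P y p}

/-- The total space `E_P = ⊔_y P_y` of the bundle associated to `P`. -/
abbrev TotalP : Type := (y : Y) × Fib Y P y

/-- The basic sets `U_{p,ε}` of the bundle `E_P`. -/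
def basisP : Set (Set (TotalP Y P)) :=
  {S | ∃ (U : Set Y) (p : P) (ε : ℝ), IsOpen U ∧ 0 < ε ∧
    S = {e : TotalP Y P | e.1 ∈ U ∧ fibNormQ Y P e.1 (e.2 - fibMk Y P e.1 p) < ε}}

/-- The topology on `E_P` generated by the sets `U_{p,ε}`. -/
def topEP : TopologicalSpace (TotalP Y P) := TopologicalSpace.generateFrom (basisP Y P)

/-- The continuous sections of `E_P` vanishing at infinity. -/
def C0SectionsP : Set ((y : Y) → Fib Y P y) :=
  {F | @Continuous Y (TotalP Y P) _ (topEP Y P) (fun y => ⟨y, F y⟩) ∧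
    Tendsto (fun y => fibNormQ Y P y (F y)) (cocompact Y) (nhds 0)}

/-- The section `p̂` associated to `p ∈ P`. -/
def hatSec (p : P) : (y : Y) → Fib Y P y := fun y => fibMk Y P y p

/-- Transport between fibers of `E_P` over equal base points. -/
def fcast {y z : Y} (h : y = z) : Fib Y P y → Fib Y P z := fun v => h ▸ v


variable (Y : Type) [TopologicalSpace Y]

/-- A second countable locally compact Hausdorff proper topological groupoid with unit
space `Y`.  Multiplication is recorded as a total map which is only constrained on
composable pairs. -/
structure LCGroupoid where
  G : Type
  [topG : TopologicalSpace G]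
  [t2G : T2Space G]
  [lcG : LocallyCompactSpace G]
  [scG : SecondCountableTopology G]
  [mG : MeasurableSpace G]
  [bG : BorelSpace G]
  r : G → Y
  s : G → Y
  unit : Y → G
  mul : G → G → G
  inv : G → G
  unit_embedding : Topology.IsEmbedding unit
  r_unit : ∀ y, r (unit y) = y
  s_unit : ∀ y, s (unit y) = y
  r_cont : Continuous r
  s_cont : Continuous s
  inv_cont : Continuous inv
  mul_cont : Continuous fun p : {p : G × G // s p.1 = r p.2} => mul p.1.1 p.1.2
  r_mul : ∀ g h, s g = r h → r (mul g h) = r g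
  s_mul : ∀ g h, s g = r h → s (mul g h) = s h
  mul_assoc : ∀ g h k, s g = r h → s h = r k → mul (mul g h) k = mul g (mul h k)
  mul_unit : ∀ g, mul g (unit (s g)) = g
  unit_mul : ∀ g, mul (unit (r g)) g = g
  r_inv : ∀ g, r (inv g) = s g
  s_inv : ∀ g, s (inv g) = r g
  mul_inv : ∀ g, mul g (inv g) = unit (r g)
  inv_mul : ∀ g, mul (inv g) g = unit (s g)
  proper : IsProperMap fun g => (r g, s g)

attribute [instance] LCGroupoid.topG LCGroupoid.t2G LCGroupoid.lcG LCGroupoid.scG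
  LCGroupoid.mG LCGroupoid.bG

variable (Gp : LCGroupoid Y)

/-- A left Haar system `{λ^y}` for the groupoid `Gp`:  `λ^y` is a Radon-type measure
concentrated on `G^y = r⁻¹(y)` with support `G^y`, varying continuously, and
left invariant. -/
structure HaarSystem where
  lam : Y → MeasureTheory.Measure Gp.G
  concentrated : ∀ y, lam y ((Gp.r ⁻¹' {y})ᶜ) = 0
  full : ∀ (y : Y) (U : Set Gp.G), IsOpen U → (U ∩ Gp.r ⁻¹' {y}).Nonempty → lam y U ≠ 0
  finiteOnCompacts : ∀ (y : Y) (K : Set Gp.G), IsCompact K → lam y K ≠ ⊤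
  integral_continuous : ∀ F : Gp.G → ℂ, Continuous F → HasCompactSupport F →
    Continuous fun y => ∫ g, F g ∂(lam y)
  left_invariant : ∀ (g₀ : Gp.G) (F : Gp.G → ℂ), Continuous F → HasCompactSupport F →
    ∫ g, F (Gp.mul g₀ g) ∂(lam (Gp.s g₀)) = ∫ g, F g ∂(lam (Gp.r g₀))

/-- Continuous compactly supported functions on the groupoid `Gp`. -/
def CcFun : Type := {F : Gp.G → ℂ // Continuous F ∧ HasCompactSupport F}


section GroupoidActions

variable {Y : Type} [TopologicalSpace Y] (Gp : LCGroupoid Y)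
variable (P : Type) [NormedAddCommGroup P] [NormedSpace ℂ P] [HilbertCzeroModule Y P]

/-- A continuous, unitary left action of the groupoid `Gp` on the Hilbert bundle `E_P`
associated to the Hilbert `C₀(Y)`-module `P`: this is the datum making `P` a
`G`-Hilbert module. -/
structure GAction where
  act : (g : Gp.G) → Fib Y P (Gp.s g) → Fib Y P (Gp.r g)
  act_add : ∀ (g : Gp.G) (v w : Fib Y P (Gp.s g)), act g (v + w) = act g v + act g w
  act_csmul : ∀ (g : Gp.G) (c : ℂ) (v : Fib Y P (Gp.s g)), act g (c • v) = c • act g v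
  act_norm : ∀ (g : Gp.G) (v : Fib Y P (Gp.s g)),
    fibNormQ Y P (Gp.r g) (act g v) = fibNormQ Y P (Gp.s g) v
  act_surjective : ∀ g : Gp.G, Function.Surjective (act g)
  act_unit : ∀ (y : Y) (v : Fib Y P y),
    act (Gp.unit y) (fcast Y P (Gp.s_unit y).symm v) = fcast Y P (Gp.r_unit y).symm v
  act_mul : ∀ (g h : Gp.G) (hc : Gp.s g = Gp.r h) (v : Fib Y P (Gp.s h)),
    act (Gp.mul g h) (fcast Y P (Gp.s_mul g h hc).symm v) =
      fcast Y P (Gp.r_mul g h hc).symm (act g (fcast Y P hc.symm (act h v)))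
  act_cont : @Continuous {q : Gp.G × TotalP Y P // Gp.s q.1 = q.2.1} (TotalP Y P)
    (@instTopologicalSpaceSubtype _ _ (@instTopologicalSpaceProd _ _ _ (topEP Y P)))
    (topEP Y P)
    (fun q => ⟨Gp.r q.1.1, act q.1.1 (fcast Y P q.2.symm q.1.2.2)⟩)

variable {Gp P}
variable {Q : Type} [NormedAddCommGroup Q] [NormedSpace ℂ Q] [HilbertCzeroModule Y Q]

/-- A `G`-equivariant unitary isomorphism of `G`-Hilbert modules:  a bijective,
`ℂ`-linear, `C₀(Y)`-linear, inner-product preserving map intertwining the `G`-actions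
on the associated Hilbert bundles. -/
def IsGEquivariantUnitary (T : P → Q) (AP : GAction Gp P) (AQ : GAction Gp Q) : Prop :=
  Function.Bijective T ∧
  (∀ p p' : P, T (p + p') = T p + T p') ∧
  (∀ (c : ℂ) (p : P), T (c • p) = c • T p) ∧
  (∀ (p : P) (f : C₀(Y, ℂ)), T (modSMul Y p f) = modSMul Y (T p) f) ∧
  (∀ p p' : P, modIP Y (T p) (T p') = modIP Y p p') ∧
  (∀ (g : Gp.G) (p p' : P),
      AP.act g (fibMk Y P (Gp.s g) p) = fibMk Y P (Gp.r g) p' →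
      AQ.act g (fibMk Y Q (Gp.s g) (T p)) = fibMk Y Q (Gp.r g) (T p'))

/-- Equivalence of `G`-Hilbert modules: existence of a `G`-equivariant unitary. -/
def GEquiv (AP : GAction Gp P) (AQ : GAction Gp Q) : Prop :=
  ∃ T : P → Q, IsGEquivariantUnitary T AP AQ

end GroupoidActions

section ModuleConstructions

variable {Y : Type} [TopologicalSpace Y] (Gp : LCGroupoid Y)

/-- Data exhibiting a Hilbert `C₀(Y)`-module `PG` as the completion `P_G` of the
pre-Hilbert `C₀(Y)`-module `C_c(G)`, with module action `F·f = F·(f∘r)` and inner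
product `⟨F₁,F₂⟩(y) = ∫_{G^y} conj F₁ · F₂ dλ^y`. -/
structure PGData (hs : HaarSystem Y Gp) (PG : Type) [NormedAddCommGroup PG]
    [NormedSpace ℂ PG] [HilbertCzeroModule Y PG] where
  emb : CcFun Y Gp → PG
  emb_add : ∀ F₁ F₂ F₃ : CcFun Y Gp, F₃.1 = F₁.1 + F₂.1 → emb F₃ = emb F₁ + emb F₂
  emb_csmul : ∀ (c : ℂ) (F₁ F₃ : CcFun Y Gp), F₃.1 = c • F₁.1 → emb F₃ = c • emb F₁
  emb_msmul : ∀ (F₁ F₃ : CcFun Y Gp) (f : C₀(Y, ℂ)),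
    F₃.1 = (fun g => F₁.1 g * f (Gp.r g)) → emb F₃ = modSMul Y (emb F₁) f
  emb_inner : ∀ (F₁ F₂ : CcFun Y Gp) (y : Y),
    modIP Y (emb F₁) (emb F₂) y = ∫ g, conj (F₁.1 g) * F₂.1 g ∂(hs.lam y)
  emb_dense : ∀ (p : PG) (ε : ℝ), 0 < ε → ∃ F : CcFun Y Gp, ‖p - emb F‖ < ε

variable {Gp}

/-- The natural left translation action of `G` on `L²(G) = E_{P_G}`, characterized on
the dense image of `C_c(G)` by `(g·ξ)(h) = ξ(g⁻¹h)` for `h ∈ G^{r(g)}`. -/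
def IsNaturalPGAction {hs : HaarSystem Y Gp} {PG : Type} [NormedAddCommGroup PG]
    [NormedSpace ℂ PG] [HilbertCzeroModule Y PG] (d : PGData Gp hs PG)
    (A : GAction Gp PG) : Prop :=
  ∀ (g : Gp.G) (F F' : CcFun Y Gp),
    (∀ h : Gp.G, Gp.r h = Gp.r g → F'.1 h = F.1 (Gp.mul (Gp.inv g) h)) →
    A.act g (fibMk Y PG (Gp.s g) (d.emb F)) = fibMk Y PG (Gp.r g) (d.emb F')

end ModuleConstructions

section TensorSum

/-- Data exhibiting `R` as the interior tensor product `P ⊗_{C₀(Y)} Q` of two Hilbert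
`C₀(Y)`-modules: a balanced bilinear map with dense span satisfying
`⟨p₁⊗q₁, p₂⊗q₂⟩ = ⟨p₁,p₂⟩⟨q₁,q₂⟩`. -/
structure TensorData (Y : Type) [TopologicalSpace Y] (P Q R : Type)
    [NormedAddCommGroup P] [NormedSpace ℂ P] [HilbertCzeroModule Y P]
    [NormedAddCommGroup Q] [NormedSpace ℂ Q] [HilbertCzeroModule Y Q]
    [NormedAddCommGroup R] [NormedSpace ℂ R] [HilbertCzeroModule Y R] where
  t : P → Q → R
  t_add_left : ∀ (p p' : P) (q : Q), t (p + p') q = t p q + t p' q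
  t_add_right : ∀ (p : P) (q q' : Q), t p (q + q') = t p q + t p q'
  t_csmul_left : ∀ (c : ℂ) (p : P) (q : Q), t (c • p) q = c • t p q
  t_csmul_right : ∀ (c : ℂ) (p : P) (q : Q), t p (c • q) = c • t p q
  t_msmul_left : ∀ (p : P) (q : Q) (f : C₀(Y, ℂ)), t (modSMul Y p f) q = modSMul Y (t p q) f
  t_msmul_right : ∀ (p : P) (q : Q) (f : C₀(Y, ℂ)), t p (modSMul Y q f) = modSMul Y (t p q) f
  t_inner : ∀ (p p' : P) (q q' : Q),
    modIP Y (t p q) (t p' q') = modIP Y p p' * modIP Y q q'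
  t_dense : ∀ (x : R) (ε : ℝ), 0 < ε →
    ∃ (n : ℕ) (ps : Fin n → P) (qs : Fin n → Q), ‖x - ∑ i, t (ps i) (qs i)‖ < ε

/-- Data exhibiting `S` as the Hilbert `C₀(Y)`-module direct sum `P ⊕ Q`. -/
structure SumData (Y : Type) [TopologicalSpace Y] (P Q S : Type)
    [NormedAddCommGroup P] [NormedSpace ℂ P] [HilbertCzeroModule Y P]
    [NormedAddCommGroup Q] [NormedSpace ℂ Q] [HilbertCzeroModule Y Q]
    [NormedAddCommGroup S] [NormedSpace ℂ S] [HilbertCzeroModule Y S] where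
  inl : P → S
  inr : Q → S
  inl_add : ∀ p p' : P, inl (p + p') = inl p + inl p'
  inr_add : ∀ q q' : Q, inr (q + q') = inr q + inr q'
  inl_csmul : ∀ (c : ℂ) (p : P), inl (c • p) = c • inl p
  inr_csmul : ∀ (c : ℂ) (q : Q), inr (c • q) = c • inr q
  inl_msmul : ∀ (p : P) (f : C₀(Y, ℂ)), inl (modSMul Y p f) = modSMul Y (inl p) f
  inr_msmul : ∀ (q : Q) (f : C₀(Y, ℂ)), inr (modSMul Y q f) = modSMul Y (inr q) f
  inner_ll : ∀ p p' : P, modIP Y (inl p) (inl p') = modIP Y p p'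
  inner_rr : ∀ q q' : Q, modIP Y (inr q) (inr q') = modIP Y q q'
  inner_lr : ∀ (p : P) (q : Q), modIP Y (inl p) (inr q) = 0
  total : ∀ x : S, ∃ (p : P) (q : Q), x = inl p + inr q

/-- Data exhibiting `S` as the Hilbert `C₀(Y)`-module direct sum `⊕_{i=1}^∞ P i` of a
sequence of Hilbert `C₀(Y)`-modules: the module of sequences `{p_i}`, `p_i ∈ P i`, with
`Σ_i ⟨p_i,p_i⟩` convergent in `C₀(Y)`. -/
structure InftySumData (Y : Type) [TopologicalSpace Y] (Pf : ℕ → Type) (S : Type)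
    [∀ i, NormedAddCommGroup (Pf i)] [∀ i, NormedSpace ℂ (Pf i)]
    [∀ i, HilbertCzeroModule Y (Pf i)]
    [NormedAddCommGroup S] [NormedSpace ℂ S] [HilbertCzeroModule Y S] where
  proj : (i : ℕ) → S → Pf i
  proj_add : ∀ (i : ℕ) (x x' : S), proj i (x + x') = proj i x + proj i x'
  proj_csmul : ∀ (i : ℕ) (c : ℂ) (x : S), proj i (c • x) = c • proj i x
  proj_msmul : ∀ (i : ℕ) (x : S) (f : C₀(Y, ℂ)),
    proj i (modSMul Y x f) = modSMul Y (proj i x) f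
  proj_inner : ∀ x x' : S, HasSum (fun i => modIP Y (proj i x) (proj i x')) (modIP Y x x')
  proj_injective : ∀ x x' : S, (∀ i, proj i x = proj i x') → x = x'
  proj_surjective : ∀ u : (i : ℕ) → Pf i, Summable (fun i => modIP Y (u i) (u i)) →
    ∃ x : S, ∀ i, proj i x = u i

variable {Y : Type} [TopologicalSpace Y] {Gp : LCGroupoid Y}
variable {P Q R S : Type}
  [NormedAddCommGroup P] [NormedSpace ℂ P] [HilbertCzeroModule Y P]
  [NormedAddCommGroup Q] [NormedSpace ℂ Q] [HilbertCzeroModule Y Q]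
  [NormedAddCommGroup R] [NormedSpace ℂ R] [HilbertCzeroModule Y R]
  [NormedAddCommGroup S] [NormedSpace ℂ S] [HilbertCzeroModule Y S]

/-- The diagonal `G`-action on a tensor product `P ⊗_{C₀(Y)} Q`. -/
def IsDiagonalAction (td : TensorData Y P Q R) (AP : GAction Gp P) (AQ : GAction Gp Q)
    (AR : GAction Gp R) : Prop :=
  ∀ (g : Gp.G) (p p' : P) (q q' : Q),
    AP.act g (fibMk Y P (Gp.s g) p) = fibMk Y P (Gp.r g) p' →
    AQ.act g (fibMk Y Q (Gp.s g) q) = fibMk Y Q (Gp.r g) q' →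
    AR.act g (fibMk Y R (Gp.s g) (td.t p q)) = fibMk Y R (Gp.r g) (td.t p' q')

/-- The coordinatewise `G`-action on a direct sum `P ⊕ Q`. -/
def IsCoordinateSumAction (sd : SumData Y P Q S) (AP : GAction Gp P) (AQ : GAction Gp Q)
    (AS : GAction Gp S) : Prop :=
  (∀ (g : Gp.G) (p p' : P),
    AP.act g (fibMk Y P (Gp.s g) p) = fibMk Y P (Gp.r g) p' →
    AS.act g (fibMk Y S (Gp.s g) (sd.inl p)) = fibMk Y S (Gp.r g) (sd.inl p')) ∧
  (∀ (g : Gp.G) (q q' : Q),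
    AQ.act g (fibMk Y Q (Gp.s g) q) = fibMk Y Q (Gp.r g) q' →
    AS.act g (fibMk Y S (Gp.s g) (sd.inr q)) = fibMk Y S (Gp.r g) (sd.inr q'))

/-- The coordinatewise `G`-action on an infinite direct sum `⊕_{i=1}^∞ P i`. -/
def IsCoordinateInftyAction {Pf : ℕ → Type} [∀ i, NormedAddCommGroup (Pf i)]
    [∀ i, NormedSpace ℂ (Pf i)] [∀ i, HilbertCzeroModule Y (Pf i)]
    (d : InftySumData Y Pf S) (Af : (i : ℕ) → GAction Gp (Pf i))
    (AS : GAction Gp S) : Prop :=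
  ∀ (g : Gp.G) (x x' : S),
    AS.act g (fibMk Y S (Gp.s g) x) = fibMk Y S (Gp.r g) x' →
    ∀ i, (Af i).act g (fibMk Y (Pf i) (Gp.s g) (d.proj i x)) =
      fibMk Y (Pf i) (Gp.r g) (d.proj i x')

end TensorSum
/-! ### Fibers of a Hilbert `C₀(Y)`-module -/

section Fibers

variable {Y : Type} [TopologicalSpace Y]
variable {P : Type} [NormedAddCommGroup P] [NormedSpace ℂ P] [HilbertCzeroModule Y P]

lemma modIP_add_right (p q r : P) : modIP Y p (q + r) = modIP Y p q + modIP Y p r :=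
  HilbertCzeroModule.minner_add_right p q r

lemma modIP_smul_right (c : ℂ) (p q : P) : modIP Y p (c • q) = c • modIP Y p q :=
  HilbertCzeroModule.minner_csmul_right c p q

lemma modIP_conj (p q : P) (y : Y) : modIP Y p q y = conj (modIP Y q p y) := by
  have h : modIP Y p q = star (modIP Y q p) := HilbertCzeroModule.minner_conj p q
  rw [h]; rfl

lemma modIP_modSMul_right (p q : P) (f : C₀(Y, ℂ)) (y : Y) :
    modIP Y p (modSMul Y q f) y = modIP Y p q y * f y := by
  have h : modIP Y p (modSMul Y q f) = modIP Y p q * f :=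
    HilbertCzeroModule.minner_msmul_right p q f
  rw [h]; rfl

lemma modIP_modSMul_left (p q : P) (f : C₀(Y, ℂ)) (y : Y) :
    modIP Y (modSMul Y p f) q y = conj (f y) * modIP Y p q y := by
  rw [modIP_conj, modIP_modSMul_right, map_mul, ← modIP_conj, mul_comm]

lemma modIP_add_left (p q r : P) (y : Y) :
    modIP Y (p + q) r y = modIP Y p r y + modIP Y q r y := by
  rw [modIP_conj, modIP_add_right, ZeroAtInftyContinuousMap.add_apply, map_add, ← modIP_conj,
    ← modIP_conj]

lemma modIP_smul_left (c : ℂ) (p q : P) (y : Y) :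
    modIP Y (c • p) q y = conj c * modIP Y p q y := by
  rw [modIP_conj, modIP_smul_right, ZeroAtInftyContinuousMap.smul_apply, smul_eq_mul, map_mul,
    ← modIP_conj]

lemma modIP_sub_left (p q r : P) (y : Y) :
    modIP Y (p - q) r y = modIP Y p r y - modIP Y q r y := by
  have := modIP_add_left (p - q) q r y
  rw [sub_add_cancel] at this
  rw [this]; ring

lemma modIP_sub_right (p q r : P) (y : Y) :
    modIP Y p (q - r) y = modIP Y p q y - modIP Y p r y := by
  rw [modIP_conj, modIP_sub_left, map_sub, ← modIP_conj, ← modIP_conj]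

lemma modIP_self_re_nonneg (p : P) (y : Y) : 0 ≤ (modIP Y p p y).re :=
  HilbertCzeroModule.minner_self_re_nonneg p y

lemma modIP_self (p : P) (y : Y) : modIP Y p p y = (((modIP Y p p y).re : ℝ) : ℂ) :=
  Complex.ext (by simp) (by simpa using! HilbertCzeroModule.minner_self_im p y)

lemma norm_modIP_self (p : P) (y : Y) : ‖modIP Y p p y‖ = (modIP Y p p y).re := by
  rw [modIP_self, Complex.norm_real, Real.norm_of_nonneg (modIP_self_re_nonneg p y),
    Complex.ofReal_re]

lemma norm_apply_le_norm (f : C₀(Y, ℂ)) (y : Y) : ‖f y‖ ≤ ‖f‖ := by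
  rw [← ZeroAtInftyContinuousMap.norm_toBCF_eq_norm]
  exact f.toBCF.norm_coe_le_norm y

lemma norm_sq_eq_modIP (p : P) : ‖p‖ ^ 2 = ‖modIP Y p p‖ := by
  have h : ‖p‖ = Real.sqrt ‖modIP Y p p‖ := HilbertCzeroModule.norm_eq p
  rw [h, Real.sq_sqrt (norm_nonneg _)]

lemma re_modIP_le (p : P) (y : Y) : (modIP Y p p y).re ≤ ‖p‖ ^ 2 := by
  rw [norm_sq_eq_modIP (Y := Y), ← norm_modIP_self]
  exact norm_apply_le_norm _ _

lemma fibNormRep_le_norm (p : P) (y : Y) : fibNormRep Y P y p ≤ ‖p‖ :=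
  Real.sqrt_le_iff.2 ⟨norm_nonneg _, re_modIP_le p y⟩

lemma norm_le_of_re_modIP_le (p : P) {C : ℝ} (hC : 0 ≤ C)
    (h : ∀ y : Y, (modIP Y p p y).re ≤ C ^ 2) : ‖p‖ ≤ C := by
  refine le_of_sq_le_sq ?_ hC
  rw [norm_sq_eq_modIP (Y := Y), ← ZeroAtInftyContinuousMap.norm_toBCF_eq_norm,
    BoundedContinuousFunction.norm_le (sq_nonneg C)]
  intro y
  exact (norm_modIP_self p y).trans_le (h y)

lemma modSMul_sub (p : P) (f g : C₀(Y, ℂ)) :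
    modSMul Y p (f - g) = modSMul Y p f - modSMul Y p g := by
  have h : modSMul Y p ((f - g) + g) = modSMul Y p (f - g) + modSMul Y p g :=
    HilbertCzeroModule.msmul_add_right p (f - g) g
  rw [sub_add_cancel] at h
  exact eq_sub_of_add_eq h.symm

lemma modSMul_modSMul (p : P) (f g : C₀(Y, ℂ)) :
    modSMul Y (modSMul Y p f) g = modSMul Y p (f * g) :=
  HilbertCzeroModule.msmul_mul p f g

lemma re_modIP_modSMul (p : P) (f : C₀(Y, ℂ)) (y : Y) :
    (modIP Y (modSMul Y p f) (modSMul Y p f) y).re = ‖f y‖ ^ 2 * (modIP Y p p y).re := by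
  rw [modIP_modSMul_left, modIP_modSMul_right, mul_left_comm, mul_comm (conj _),
    Complex.mul_conj, modIP_self, ← Complex.ofReal_mul, Complex.ofReal_re,
    Complex.normSq_eq_norm_sq, Complex.ofReal_re, mul_comm]

lemma re_modIP_modSMul_sub (p : P) (f : C₀(Y, ℂ)) (y : Y) :
    (modIP Y (modSMul Y p f - p) (modSMul Y p f - p) y).re
      = ‖f y - 1‖ ^ 2 * (modIP Y p p y).re := by
  have : modIP Y (modSMul Y p f - p) (modSMul Y p f - p) y
      = ((f y - 1) * conj (f y - 1)) * modIP Y p p y := by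
    simp only [modIP_sub_left, modIP_sub_right, modIP_modSMul_left, modIP_modSMul_right,
      map_sub, map_one]
    ring
  rw [this, Complex.mul_conj, modIP_self, ← Complex.ofReal_mul, Complex.ofReal_re,
    Complex.normSq_eq_norm_sq, Complex.ofReal_re]

lemma norm_modSMul_le (p : P) (f : C₀(Y, ℂ)) : ‖modSMul Y p f‖ ≤ ‖p‖ * ‖f‖ := by
  refine norm_le_of_re_modIP_le (Y := Y) _ (by positivity) fun y => ?_
  rw [re_modIP_modSMul, mul_pow, mul_comm]
  gcongr
  · exact re_modIP_le p y
  · exact norm_apply_le_norm f y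

lemma modSMul_sub_left (p q : P) (f : C₀(Y, ℂ)) :
    modSMul Y (p - q) f = modSMul Y p f - modSMul Y q f := by
  have h : modSMul Y ((p - q) + q) f = modSMul Y (p - q) f + modSMul Y q f :=
    HilbertCzeroModule.msmul_add_left (p - q) q f
  rw [sub_add_cancel] at h
  exact eq_sub_of_add_eq h.symm

/-- The function `φ(⟨p,p⟩)` in `C₀(Y)` obtained by continuous functional calculus, for
`φ(0) = 0`. -/
def funcCalc (p : P) (φ : ℝ → ℝ) (hφ : Continuous φ) (h0 : φ 0 = 0) : C₀(Y, ℂ) where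
  toFun y := (φ (modIP Y p p y).re : ℂ)
  continuous_toFun := by
    have := (modIP Y p p).continuous
    fun_prop
  zero_at_infty' := by
    have h := (modIP Y p p).zero_at_infty'
    have hc : Continuous fun z : ℂ => ((φ z.re : ℝ) : ℂ) := by fun_prop
    have := (hc.tendsto 0).comp h
    simpa [h0] using! this

lemma funcCalc_apply (p : P) (φ : ℝ → ℝ) (hφ : Continuous φ) (h0 : φ 0 = 0) (y : Y) :
    funcCalc (Y := Y) p φ hφ h0 y = (φ (modIP Y p p y).re : ℂ) := rfl

/-- Elements of `I_y P` are orthogonal to everything at `y`. -/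
lemma modIP_eq_zero_of_mem {y : Y} {n : P} (hn : n ∈ fiberIdeal Y P y) (q : P) :
    modIP Y n q y = 0 := by
  induction hn using Submodule.span_induction with
  | mem x hx =>
    obtain ⟨f, p, hf, rfl⟩ := hx
    rw [modIP_modSMul_left, hf, map_zero, zero_mul]
  | zero =>
    have := modIP_sub_left (0 : P) 0 q y
    rwa [sub_zero, sub_self] at this
  | add x z _ _ hx hz => rw [modIP_add_left, hx, hz, add_zero]
  | smul c x _ hx => rw [modIP_smul_left, hx, mul_zero]

lemma fibNormRep_sub_of_mem {y : Y} {n : P} (hn : n ∈ fiberIdeal Y P y) (p : P) :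
    fibNormRep Y P y (p - n) = fibNormRep Y P y p := by
  have h1 := modIP_eq_zero_of_mem hn
  have h2 : modIP Y p n y = 0 := by rw [modIP_conj, h1, map_zero]
  simp only [fibNormRep, modIP_sub_left, modIP_sub_right, h1, h2, sub_zero]

/-- The factorization property of Hilbert modules: an element whose norm vanishes at `y` is of
the form `q·f` with `f(y) = 0`. Here `f = ⟨p,p⟩^{1/4}`, and `q = p·f⁻¹` is obtained as the limit
of `p·f(f² + ε)⁻¹` as `ε → 0`. -/
lemma mem_fiberIdeal_of_re_eq_zero [CompleteSpace P] {y : Y} {p : P}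
    (hp : (modIP Y p p y).re = 0) : p ∈ fiberIdeal Y P y := by
  let ε : ℕ → ℝ := fun k => 1 / ((k : ℝ) + 1)
  have hε : ∀ k, 0 < ε k := fun k => Nat.one_div_pos_of_nat
  have hεt : Tendsto ε atTop (𝓝 0) := tendsto_one_div_add_atTop_nhds_zero_nat
  have hεa : Antitone ε := fun a b h => one_div_le_one_div_of_le (by positivity) (by gcongr)
  let φ : ℝ → ℝ := fun t => √√t
  let ψ : ℕ → ℝ → ℝ := fun k t => √√t / (√t + ε k)
  have hden : ∀ k t, 0 < √t + ε k := fun k t => add_pos_of_nonneg_of_pos (by positivity) (hε k)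
  have hφc : Continuous φ := by fun_prop
  have hψc : ∀ k, Continuous (ψ k) := fun k =>
    Continuous.div (by fun_prop) (by fun_prop) fun t => (hden k t).ne'
  let f : C₀(Y, ℂ) := funcCalc p φ hφc (by simp [φ])
  let g : ℕ → C₀(Y, ℂ) := fun k => funcCalc p (ψ k) (hψc k) (by simp [ψ])
  -- `√t |ψ_k(t) - √√t/√t| ≤ √ε_k`, phrased without the singular quotient.
  have key : ∀ k t, 0 ≤ t → |√t * ψ k t - √√t| ≤ √(ε k) := by
    intro k t ht
    obtain ⟨a, ha, hat⟩ : ∃ a : ℝ, 0 ≤ a ∧ √t = a ^ 2 :=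
      ⟨√√t, by positivity, (Real.sq_sqrt (by positivity)).symm⟩
    obtain ⟨e, he, hek⟩ : ∃ e : ℝ, 0 < e ∧ ε k = e ^ 2 :=
      ⟨√(ε k), Real.sqrt_pos.2 (hε k), (Real.sq_sqrt (hε k).le).symm⟩
    simp only [ψ, hat, hek, Real.sqrt_sq ha, Real.sqrt_sq he.le]
    have hd : 0 < a ^ 2 + e ^ 2 := by positivity
    rw [show a ^ 2 * (a / (a ^ 2 + e ^ 2)) - a = -(a * e ^ 2 / (a ^ 2 + e ^ 2)) by
      field_simp; ring, abs_neg, abs_of_nonneg (by positivity), div_le_iff₀ hd]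
    nlinarith [mul_nonneg he.le (sq_nonneg (a - e)), mul_nonneg ha he.le,
      mul_nonneg (mul_nonneg ha he.le) he.le, pow_pos he 3]
  have hcauchy : CauchySeq fun k => modSMul Y p (g k) := by
    refine cauchySeq_of_le_tendsto_0 (fun N => 2 * √(ε N)) ?_ ?_
    · intro n m N hn hm
      rw [dist_eq_norm, ← modSMul_sub]
      refine norm_le_of_re_modIP_le (Y := Y) _ (by positivity) fun z => ?_
      have ht := modIP_self_re_nonneg p z
      rw [re_modIP_modSMul]
      simp only [g, ZeroAtInftyContinuousMap.sub_apply, funcCalc_apply]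
      rw [← Complex.ofReal_sub, Complex.norm_real]
      generalize (modIP Y p p z).re = t at ht
      have e1 := (key n t ht).trans (Real.sqrt_le_sqrt (hεa hn))
      have e2 := (key m t ht).trans (Real.sqrt_le_sqrt (hεa hm))
      have e3 : |√t * (ψ n t - ψ m t)| ≤ 2 * √(ε N) := by
        rw [abs_le] at *
        constructor <;> linarith
      calc ‖ψ n t - ψ m t‖ ^ 2 * t = |√t * (ψ n t - ψ m t)| ^ 2 := by
            rw [sq_abs, mul_pow, Real.sq_sqrt ht, Real.norm_eq_abs, sq_abs, mul_comm]
        _ ≤ _ := by gcongr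
    · have : Tendsto (fun N => 2 * √(ε N)) atTop (𝓝 (2 * √0)) :=
        (((Real.continuous_sqrt.tendsto 0).comp hεt).const_mul 2)
      simpa using this
  obtain ⟨q, hq⟩ := cauchySeq_tendsto_of_complete hcauchy
  have h1 : Tendsto (fun k => modSMul Y (modSMul Y p (g k)) f) atTop (𝓝 (modSMul Y q f)) := by
    rw [tendsto_iff_norm_sub_tendsto_zero] at hq ⊢
    refine squeeze_zero (fun _ => norm_nonneg _) (fun k => ?_)
      (by simpa using hq.mul_const ‖f‖)
    rw [← modSMul_sub_left]
    exact norm_modSMul_le _ _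
  have h2 : Tendsto (fun k => modSMul Y (modSMul Y p (g k)) f) atTop (𝓝 p) := by
    rw [tendsto_iff_norm_sub_tendsto_zero]
    refine squeeze_zero (fun _ => norm_nonneg _) (fun k => ?_) hεt
    rw [modSMul_modSMul]
    refine norm_le_of_re_modIP_le (Y := Y) _ (hε k).le fun z => ?_
    have ht := modIP_self_re_nonneg p z
    rw [re_modIP_modSMul_sub]
    simp only [f, g, ZeroAtInftyContinuousMap.mul_apply, funcCalc_apply]
    rw [← Complex.ofReal_mul, ← Complex.ofReal_one, ← Complex.ofReal_sub, Complex.norm_real]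
    generalize (modIP Y p p z).re = t at ht
    obtain ⟨a, ha, hat⟩ : ∃ a : ℝ, 0 ≤ a ∧ √t = a ^ 2 :=
      ⟨√√t, by positivity, (Real.sq_sqrt (by positivity)).symm⟩
    have htt : t = (a ^ 2) ^ 2 := by rw [← hat, Real.sq_sqrt ht]
    have hd : 0 < a ^ 2 + ε k := hat ▸ hden k t
    simp only [ψ, φ, hat, Real.sqrt_sq ha]
    rw [Real.norm_eq_abs, htt, ← sq_abs (a ^ 2), ← mul_pow, ← abs_mul]
    have e : (a / (a ^ 2 + ε k) * a - 1) * a ^ 2 = -(ε k * (a ^ 2 / (a ^ 2 + ε k))) := by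
      field_simp; ring
    rw [e, abs_neg, abs_of_nonneg (by have := hε k; positivity)]
    have : a ^ 2 / (a ^ 2 + ε k) ≤ 1 := (div_le_one hd).2 (by linarith [hε k])
    have h0 : 0 ≤ a ^ 2 / (a ^ 2 + ε k) := by positivity
    gcongr
    nlinarith [hε k]
  rw [← tendsto_nhds_unique h1 h2]
  refine Submodule.subset_span ⟨f, q, ?_, rfl⟩
  simp [f, funcCalc_apply, hp, φ]

lemma mem_fiberIdeal_of_fibNormRep_eq_zero [CompleteSpace P] {y : Y} {p : P}
    (hp : fibNormRep Y P y p = 0) : p ∈ fiberIdeal Y P y :=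
  mem_fiberIdeal_of_re_eq_zero ((Real.sqrt_eq_zero (modIP_self_re_nonneg p y)).1 hp)

lemma fibNormRep_nonneg (y : Y) (p : P) : 0 ≤ fibNormRep Y P y p := Real.sqrt_nonneg _

instance isClosed_fiberIdeal [CompleteSpace P] (y : Y) :
    IsClosed (fiberIdeal Y P y : Set P) := by
  refine isClosed_of_closure_subset fun p hp => ?_
  refine mem_fiberIdeal_of_fibNormRep_eq_zero
    (le_antisymm (le_of_forall_pos_le_add fun ε hε => ?_) (fibNormRep_nonneg y p))
  obtain ⟨n, hn, hd⟩ := Metric.mem_closure_iff.1 hp ε hε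
  rw [zero_add, ← fibNormRep_sub_of_mem hn]
  exact (fibNormRep_le_norm _ y).trans (by rw [← dist_eq_norm]; exact hd.le)

lemma continuous_fibNormRep (p : P) : Continuous fun y : Y => fibNormRep Y P y p := by
  have := (modIP Y p p).continuous
  unfold fibNormRep
  fun_prop

/-- The quotient norm on `P / I_y P` is `⟨p,p⟩(y)^{1/2}`. For `≤`, a representative is cut off to
a neighborhood of `y` on which `⟨p,p⟩` is almost at most its value at `y`. -/
lemma norm_fibMk [T2Space Y] [LocallyCompactSpace Y] [CompleteSpace P] (y : Y) (p : P) :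
    ‖fibMk Y P y p‖ = fibNormRep Y P y p := by
  refine le_antisymm (le_of_forall_pos_le_add fun ε hε => ?_)
    (le_of_forall_pos_le_add fun ε hε => ?_)
  · set c := fibNormRep Y P y p + ε with hc
    have hc0 : 0 ≤ c := add_nonneg (fibNormRep_nonneg _ _) hε.le
    obtain ⟨f, hf1, hf0, hfc, hf⟩ := exists_continuous_one_zero_of_isCompact
      (isCompact_singleton (x := y))
      (isClosed_le continuous_const (continuous_fibNormRep p) :
        IsClosed {z : Y | c ≤ fibNormRep Y P z p})
      (by simp [hc, hε])
    have hfC : HasCompactSupport fun z => (f z : ℂ) := hfc.comp_left (g := Complex.ofReal) rfl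
    let F : C₀(Y, ℂ) := ⟨⟨fun z => (f z : ℂ), by fun_prop⟩,
      hfC.is_zero_at_infty⟩
    have hFz : ∀ z, F z = (f z : ℂ) := fun z => rfl
    have e : fibMk Y P y p = fibMk Y P y (modSMul Y p F) := by
      refine ((Submodule.Quotient.eq _).2 (mem_fiberIdeal_of_re_eq_zero ?_)).symm
      rw [re_modIP_modSMul_sub, hFz, hf1 rfl]
      simp
    rw [e]
    refine (Submodule.Quotient.norm_mk_le _ _).trans (norm_le_of_re_modIP_le (Y := Y) _ hc0 ?_)
    intro z
    rw [re_modIP_modSMul, hFz, Complex.norm_real]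
    by_cases hz : c ≤ fibNormRep Y P z p
    · rw [hf0 hz]; simp; positivity
    · push Not at hz
      have h1 := Real.lt_sq_of_sqrt_lt hz
      have h2 : ‖f z‖ ^ 2 ≤ 1 := by
        rw [Real.norm_of_nonneg (hf z).1]
        exact pow_le_one₀ (hf z).1 (hf z).2
      nlinarith [modIP_self_re_nonneg p z]
  · obtain ⟨q, hq, hlt⟩ := Submodule.Quotient.norm_mk_lt (fibMk Y P y p) hε
    have hm : p - q ∈ fiberIdeal Y P y := (Submodule.Quotient.eq _).1 hq.symm
    have := fibNormRep_sub_of_mem hm p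
    rw [sub_sub_cancel] at this
    exact this ▸ ((fibNormRep_le_norm q y).trans hlt.le)

lemma fibNormQ_eq_norm [T2Space Y] [LocallyCompactSpace Y] [CompleteSpace P] (y : Y)
    (v : Fib Y P y) : fibNormQ Y P y v = ‖v‖ := by
  obtain ⟨p, rfl⟩ := Submodule.Quotient.mk_surjective _ v
  have : {r | ∃ q : P, Submodule.Quotient.mk p = fibMk Y P y q ∧ r = fibNormRep Y P y q}
      = {‖fibMk Y P y p‖} := by
    ext r
    constructor
    · rintro ⟨q, hq, rfl⟩
      rw [← norm_fibMk, ← hq]; rfl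
    · rintro rfl
      exact ⟨p, rfl, norm_fibMk y p⟩
  rw [fibNormQ, this, csInf_singleton]; rfl

/-- The basic sets `U_{p,ε}` of the bundle are open. -/
lemma isOpen_basic [T2Space Y] [LocallyCompactSpace Y] [CompleteSpace P] {U : Set Y}
    (hU : IsOpen U) (p : P) {ε : ℝ} (hε : 0 < ε) :
    IsOpen[topEP Y P] {e : TotalP Y P | e.1 ∈ U ∧ ‖e.2 - fibMk Y P e.1 p‖ < ε} := by
  refine TopologicalSpace.isOpen_generateFrom_of_mem ⟨U, p, ε, hU, hε, ?_⟩
  simp only [fibNormQ_eq_norm]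

lemma fcast_fibMk {y z : Y} (h : y = z) (p : P) :
    fcast Y P h (fibMk Y P y p) = fibMk Y P z p := by
  subst h; rfl

lemma norm_fcast_sub {y z : Y} (h : y = z) (v : Fib Y P y) (p : P) :
    ‖fcast Y P h v - fibMk Y P z p‖ = ‖v - fibMk Y P y p‖ := by
  subst h; rfl

lemma continuous_fcast {y z : Y} (h : y = z) : Continuous (fcast Y P h) := by
  subst h; exact continuous_id

end Fibers

/-! ### Compactly supported functions and their translates -/

section Translates

/-- Tietze extension with control of the support. -/
lemma exists_Cc_extension {X : Type} [TopologicalSpace X] [T2Space X] [LocallyCompactSpace X]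
    [SecondCountableTopology X] {Z K : Set X} (hZ : IsClosed Z) (hK : IsCompact K) {f : X → ℂ}
    (hf : ContinuousOn f Z) (h0 : ∀ x ∈ Z, x ∉ K → f x = 0) :
    ∃ F : X → ℂ, Continuous F ∧ HasCompactSupport F ∧ ∀ x ∈ Z, F x = f x := by
  obtain ⟨F₀, hF₀⟩ := ContinuousMap.exists_restrict_eq hZ ⟨Z.domRestrict f, hf.domRestrict⟩
  obtain ⟨χ, hχ, -, hχc, -⟩ := exists_continuous_one_zero_of_isCompact hK isClosed_empty
    (Set.disjoint_empty K)
  have hχC : HasCompactSupport fun z => (χ z : ℂ) := hχc.comp_left (g := Complex.ofReal) rfl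
  refine ⟨fun x => (χ x : ℂ) * F₀ x, by fun_prop, hχC.mul_right, fun x hx => ?_⟩
  have e : F₀ x = f x := DFunLike.congr_fun hF₀ ⟨x, hx⟩
  by_cases hxK : x ∈ K
  · simp [e, hχ hxK]
  · simp [e, h0 x hx hxK]

variable {Y : Type} [TopologicalSpace Y] {Gp : LCGroupoid Y}

lemma continuousOn_mul :
    ContinuousOn (fun p : Gp.G × Gp.G => Gp.mul p.1 p.2) {p | Gp.s p.1 = Gp.r p.2} :=
  continuousOn_iff_continuous_domRestrict.2 Gp.mul_cont

lemma inv_mul_cancel' (g h : Gp.G) (e : Gp.s g = Gp.r h) :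
    Gp.mul (Gp.inv g) (Gp.mul g h) = h := by
  rw [← Gp.mul_assoc _ _ _ (Gp.s_inv g) e, Gp.inv_mul, e, Gp.unit_mul]

lemma mul_inv_cancel' (g h : Gp.G) (e : Gp.r g = Gp.r h) :
    Gp.mul g (Gp.mul (Gp.inv g) h) = h := by
  rw [← Gp.mul_assoc _ _ _ (Gp.r_inv g).symm ((Gp.s_inv g).trans e), Gp.mul_inv, e, Gp.unit_mul]

lemma inv_unit (y : Y) : Gp.inv (Gp.unit y) = Gp.unit y := by
  have h := Gp.unit_mul (Gp.inv (Gp.unit y))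
  rw [Gp.r_inv, Gp.s_unit, Gp.mul_inv, Gp.r_unit] at h
  exact h.symm

lemma inv_mul_rev (g h : Gp.G) (e : Gp.s g = Gp.r h) :
    Gp.inv (Gp.mul g h) = Gp.mul (Gp.inv h) (Gp.inv g) := by
  have e1 : Gp.s (Gp.inv h) = Gp.r (Gp.inv g) := by rw [Gp.s_inv, Gp.r_inv, e]
  have e2 : Gp.mul (Gp.mul g h) (Gp.mul (Gp.inv h) (Gp.inv g)) = Gp.unit (Gp.r g) := by
    rw [Gp.mul_assoc _ _ _ e (by rw [Gp.r_mul _ _ e1, Gp.r_inv]), mul_inv_cancel' _ _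
      (by rw [Gp.r_inv, e]), Gp.mul_inv]
  have e3 := inv_mul_cancel' (Gp.mul g h) (Gp.mul (Gp.inv h) (Gp.inv g))
    (by rw [Gp.s_mul _ _ e, Gp.r_mul _ _ e1, Gp.r_inv])
  rw [e2] at e3
  have e4 := Gp.mul_unit (Gp.inv (Gp.mul g h))
  rw [Gp.s_inv, Gp.r_mul _ _ e, e3] at e4
  exact e4.symm

/-- `F'` restricts on `G^{r(g)}` to the left translate `h ↦ F(g⁻¹h)` of `F`. -/
def IsTranslate (g : Gp.G) (F F' : Gp.G → ℂ) : Prop :=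
  ∀ h, Gp.r h = Gp.r g → F' h = F (Gp.mul (Gp.inv g) h)

lemma IsTranslate.apply_mul {g : Gp.G} {F F' : Gp.G → ℂ} (ht : IsTranslate g F F') {h : Gp.G}
    (e : Gp.r h = Gp.s g) : F' (Gp.mul g h) = F h := by
  rw [ht _ (Gp.r_mul _ _ e.symm), inv_mul_cancel' _ _ e.symm]

/-- The translate of a `C_c` function along `g` lives on the closed subset `G^{r(g)}`; it extends
to a `C_c` function on `G` by Tietze's theorem. -/
lemma exists_translate [T2Space Y] (g : Gp.G) {F : Gp.G → ℂ} (hF : Continuous F)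
    (hFc : HasCompactSupport F) :
    ∃ F', Continuous F' ∧ HasCompactSupport F' ∧ IsTranslate g F F' := by
  have hmul : ∀ g' : Gp.G, ContinuousOn (fun h => Gp.mul g' h) {h | Gp.r h = Gp.s g'} := by
    intro g'
    refine continuousOn_mul.comp (f := fun h => (g', h)) (by fun_prop) ?_
    intro h hh
    exact Eq.symm hh
  have hcl : ∀ y, IsClosed {h | Gp.r h = y} := fun y => isClosed_eq Gp.r_cont continuous_const
  refine exists_Cc_extension (hcl (Gp.r g))
    (K := (fun h => Gp.mul g h) '' (tsupport F ∩ {h | Gp.r h = Gp.s g}))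
    ((hFc.isCompact.inter_right (hcl _)).image_of_continuousOn ((hmul g).mono (by simp)))
    (hF.comp_continuousOn ((hmul (Gp.inv g)).mono fun h hh => ?_)) fun h hh hK => ?_
  · exact Eq.trans hh (Gp.s_inv g).symm
  · by_contra hne
    have hh' : Gp.s (Gp.inv g) = Gp.r h := (Gp.s_inv g).trans (Eq.symm hh)
    exact hK ⟨Gp.mul (Gp.inv g) h, ⟨subset_tsupport _ hne,
      (Gp.r_mul _ _ hh').trans (Gp.r_inv g)⟩, mul_inv_cancel' _ _ (Eq.symm hh)⟩

/-- Uniform continuity of translation: if `F'` is the translate of `F` along `g₀`, then for `g`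
near `g₀` the function `h ↦ F h - F'(gh)` on `G^{s(g)}` is uniformly small, and it vanishes off a
fixed compact set. The exceptional `g` are the projection of a compact subset of `G × G`. -/
lemma eventually_translate_close [T2Space Y] {g₀ : Gp.G} {F F' : Gp.G → ℂ} (hF : Continuous F)
    (hFc : HasCompactSupport F) (hF' : Continuous F') (hFc' : HasCompactSupport F')
    (ht : IsTranslate g₀ F F') :
    ∃ K : Set Gp.G, IsCompact K ∧ ∀ δ > 0, ∀ᶠ g in 𝓝 g₀, ∀ h, Gp.r h = Gp.s g →
      ‖F h - F' (Gp.mul g h)‖ < δ ∧ (h ∉ K → F h - F' (Gp.mul g h) = 0) := by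
  obtain ⟨N, hN, hNg⟩ := exists_compact_mem_nhds g₀
  let C : Set (Gp.G × Gp.G) := (N ×ˢ tsupport F') ∩ {p | Gp.r p.1 = Gp.r p.2}
  have hC : IsCompact C := (hN.prod hFc'.isCompact).inter_right
    (isClosed_eq (Gp.r_cont.comp continuous_fst) (Gp.r_cont.comp continuous_snd))
  have hcont : ContinuousOn (fun p : Gp.G × Gp.G => Gp.mul (Gp.inv p.1) p.2) C := by
    refine continuousOn_mul.comp (f := fun p : Gp.G × Gp.G => (Gp.inv p.1, p.2))
      ((Gp.inv_cont.comp continuous_fst).prodMk continuous_snd).continuousOn ?_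
    rintro p ⟨-, hp⟩
    exact (Gp.s_inv _).trans hp
  let K := tsupport F ∪ (fun p : Gp.G × Gp.G => Gp.mul (Gp.inv p.1) p.2) '' C
  have hK : IsCompact K := hFc.isCompact.union (hC.image_of_continuousOn hcont)
  have hzero : ∀ g ∈ N, ∀ h, Gp.r h = Gp.s g → h ∉ K → F h - F' (Gp.mul g h) = 0 := by
    intro g hg h hh hhK
    have h1 : F h = 0 := image_eq_zero_of_notMem_tsupport fun h' => hhK (Or.inl h')
    have h2 : F' (Gp.mul g h) = 0 := by
      refine image_eq_zero_of_notMem_tsupport fun h' => hhK (Or.inr ?_)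
      exact ⟨(g, Gp.mul g h), ⟨⟨hg, h'⟩, (Gp.r_mul _ _ hh.symm).symm⟩,
        inv_mul_cancel' _ _ hh.symm⟩
    rw [h1, h2, sub_zero]
  refine ⟨K, hK, fun δ hδ => ?_⟩
  let D : Set (Gp.G × Gp.G) := (N ×ˢ K) ∩ {p | Gp.s p.1 = Gp.r p.2}
  have hD : IsCompact D := (hN.prod hK).inter_right
    (isClosed_eq (Gp.s_cont.comp continuous_fst) (Gp.r_cont.comp continuous_snd))
  have hφ : ContinuousOn (fun p : Gp.G × Gp.G => ‖F p.2 - F' (Gp.mul p.1 p.2)‖) D :=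
    ((hF.comp continuous_snd).continuousOn.sub
      (hF'.comp_continuousOn (continuousOn_mul.mono Set.inter_subset_right))).norm
  let B := D ∩ (fun p : Gp.G × Gp.G => ‖F p.2 - F' (Gp.mul p.1 p.2)‖) ⁻¹' Set.Ici δ
  have hB : IsCompact B := hD.of_isClosed_subset
    (hφ.preimage_isClosed_of_isClosed hD.isClosed isClosed_Ici) Set.inter_subset_left
  have hBcl : IsClosed (Prod.fst '' B) := (hB.image continuous_fst).isClosed
  have hg₀ : g₀ ∉ Prod.fst '' B := by
    rintro ⟨⟨g, h⟩, ⟨⟨-, hh⟩, hb⟩, rfl⟩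
    have hh' : Gp.r h = Gp.s g := Eq.symm hh
    simp only [Set.mem_preimage, Set.mem_Ici, ht.apply_mul hh', sub_self, norm_zero] at hb
    exact absurd hδ (not_lt.2 hb)
  filter_upwards [hNg, hBcl.isOpen_compl.mem_nhds hg₀] with g hg hgB h hh
  refine ⟨?_, hzero g hg h hh⟩
  by_cases hhK : h ∈ K
  · by_contra hcon
    exact hgB ⟨(g, h), ⟨⟨⟨hg, hhK⟩, hh.symm⟩, not_lt.1 hcon⟩, rfl⟩
  · rw [hzero g hg h hh hhK, norm_zero]
    exact hδ

end Translates

/-! ### Haar integrals of translates -/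

section Haar

open MeasureTheory

variable {Y : Type} [TopologicalSpace Y] {Gp : LCGroupoid Y}

lemma HaarSystem.ae_r_eq (hs : HaarSystem Y Gp) (y : Y) : ∀ᵐ h ∂(hs.lam y), Gp.r h = y :=
  hs.concentrated y

lemma HaarSystem.isFiniteMeasureOnCompacts (hs : HaarSystem Y Gp) (y : Y) :
    IsFiniteMeasureOnCompacts (hs.lam y) :=
  ⟨fun _ hK => (hs.finiteOnCompacts y _ hK).lt_top⟩

/-- Left translation by `g` is isometric from `L²(G^{s(g)})` to `L²(G^{r(g)})`. -/
lemma IsTranslate.integral_eq (hs : HaarSystem Y Gp) {g : Gp.G} {F F' : Gp.G → ℂ}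
    (hF' : Continuous F') (hFc' : HasCompactSupport F') (ht : IsTranslate g F F') :
    ∫ h, conj (F' h) * F' h ∂(hs.lam (Gp.r g)) = ∫ h, conj (F h) * F h ∂(hs.lam (Gp.s g)) := by
  rw [← hs.left_invariant g (fun h => conj (F' h) * F' h) (by fun_prop) hFc'.mul_left]
  refine integral_congr_ae ?_
  filter_upwards [hs.ae_r_eq (Gp.s g)] with h hh
  rw [ht.apply_mul hh]

/-- If `F'` is the translate of `F` along `g₀`, and `F_g` denotes a translate of `F` along `g`,
then `∫ |F_g - F'|² dλ^{r(g)} → 0` as `g → g₀`. -/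
lemma eventually_integral_lt [T2Space Y] (hs : HaarSystem Y Gp) {g₀ : Gp.G} {F F' : Gp.G → ℂ}
    (hF : Continuous F) (hFc : HasCompactSupport F) (hF' : Continuous F')
    (hFc' : HasCompactSupport F') (ht : IsTranslate g₀ F F') {ε : ℝ} (hε : 0 < ε) :
    ∀ᶠ g in 𝓝 g₀, ∀ Fg : Gp.G → ℂ, Continuous Fg → HasCompactSupport Fg → IsTranslate g F Fg →
      ‖∫ h, conj (Fg h - F' h) * (Fg h - F' h) ∂(hs.lam (Gp.r g))‖ < ε := by
  obtain ⟨K, hK, hKδ⟩ := eventually_translate_close hF hFc hF' hFc' ht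
  obtain ⟨χ, hχ, -, hχc, hχI⟩ := exists_continuous_one_zero_of_isCompact hK isClosed_empty
    (Set.disjoint_empty K)
  have hχC : HasCompactSupport fun z => (χ z : ℂ) := hχc.comp_left (g := Complex.ofReal) rfl
  -- `M g` bounds `λ^{s(g)}(K)` and is continuous in `g`.
  let M : Gp.G → ℝ := fun g => ‖∫ h, (χ h : ℂ) ∂(hs.lam (Gp.s g))‖
  have hM : Continuous M :=
    ((hs.integral_continuous _ (by fun_prop) hχC).comp Gp.s_cont).norm
  obtain ⟨δ, hδ, hδε⟩ : ∃ δ : ℝ, 0 < δ ∧ δ ^ 2 * (M g₀ + 1) < ε := by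
    have hp : 0 < M g₀ + 1 := add_pos_of_nonneg_of_pos (norm_nonneg _) one_pos
    refine ⟨√(ε / 2 / (M g₀ + 1)), by positivity, ?_⟩
    rw [Real.sq_sqrt (by positivity), div_mul_cancel₀ _ hp.ne']
    linarith
  filter_upwards [hKδ δ hδ, hM.continuousAt.eventually_lt continuousAt_const
    (lt_add_one (M g₀))] with g hg hMg Fg hFg hFgc htg
  have := hs.isFiniteMeasureOnCompacts (Gp.s g)
  have hDc : HasCompactSupport fun h => Fg h - F' h := hFgc.sub hFc'
  rw [← hs.left_invariant g (fun h => conj (Fg h - F' h) * (Fg h - F' h)) (by fun_prop)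
    hDc.mul_left]
  have hint : Integrable (fun h => δ ^ 2 * χ h) (hs.lam (Gp.s g)) :=
    (χ.continuous.integrable_of_hasCompactSupport hχc).const_mul _
  refine (norm_integral_le_of_norm_le hint ?_).trans_lt ?_
  · filter_upwards [hs.ae_r_eq (Gp.s g)] with h hh
    obtain ⟨h1, h2⟩ := hg h hh
    rw [htg.apply_mul hh, norm_mul, RCLike.norm_conj, ← sq]
    by_cases hhK : h ∈ K
    · rw [hχ hhK, Pi.one_apply, mul_one]
      gcongr
    · rw [h2 hhK, norm_zero, zero_pow two_ne_zero]
      have := (hχI h).1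
      positivity
  · rw [integral_const_mul]
    refine lt_of_le_of_lt ?_ hδε
    have e : ∫ h, χ h ∂(hs.lam (Gp.s g)) ≤ M g := by
      simp only [M]
      rw [integral_complex_ofReal, Complex.norm_real]
      exact le_abs_self _
    gcongr
    linarith

end Haar

/-! ### The translation operators on the fibers -/

section Action

variable {Y : Type} [TopologicalSpace Y] {Gp : LCGroupoid Y}
variable {hs : HaarSystem Y Gp} {PG : Type} [NormedAddCommGroup PG]
  [NormedSpace ℂ PG] [HilbertCzeroModule Y PG]

variable (Gp) in
/-- `C_c(G)` as a complex vector space. -/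
def CcSub : Submodule ℂ (Gp.G → ℂ) where
  carrier := {F | Continuous F ∧ HasCompactSupport F}
  add_mem' hF hF' := ⟨hF.1.add hF'.1, hF.2.add hF'.2⟩
  zero_mem' := ⟨continuous_const, HasCompactSupport.zero⟩
  smul_mem' c _ hF := ⟨hF.1.const_smul c, hF.2.smul_left (f := fun _ => c)⟩

/-- An element of `CcSub`, viewed in `CcFun`. -/
def toCc (F : CcSub Gp) : CcFun Y Gp := ⟨F.1, F.2⟩

/-- The image of `C_c(G)` in the fiber of `P_G` at `y`, as a linear map. -/
def fibEmb (d : PGData Gp hs PG) (y : Y) : CcSub Gp →ₗ[ℂ] Fib Y PG y where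
  toFun F := fibMk Y PG y (d.emb (toCc F))
  map_add' F F' := by
    rw [d.emb_add (toCc F) (toCc F') (toCc (F + F')) rfl]; rfl
  map_smul' c F := by
    rw [d.emb_csmul c (toCc F) (toCc (c • F)) rfl]; rfl

variable (d : PGData Gp hs PG)

lemma fibEmb_apply (y : Y) (F : CcSub Gp) : fibEmb d y F = fibMk Y PG y (d.emb (toCc F)) := rfl

lemma denseRange_fibEmb (y : Y) : DenseRange (fibEmb d y) := by
  intro v
  obtain ⟨p, rfl⟩ := Submodule.Quotient.mk_surjective _ v
  refine Metric.mem_closure_iff.2 fun ε hε => ?_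
  obtain ⟨F, hF⟩ := d.emb_dense p ε hε
  refine ⟨_, ⟨⟨F.1, F.2⟩, rfl⟩, ?_⟩
  rw [dist_eq_norm]
  exact (Submodule.Quotient.norm_mk_le (fiberIdeal Y PG y) (p - d.emb F)).trans_lt hF

variable [T2Space Y]

lemma exists_translate_Cc (g : Gp.G) (F : CcSub Gp) : ∃ F' : CcSub Gp, IsTranslate g F.1 F'.1 := by
  obtain ⟨F', h1, h2, h3⟩ := exists_translate g F.2.1 F.2.2
  exact ⟨⟨F', h1, h2⟩, h3⟩

variable [LocallyCompactSpace Y] [CompleteSpace PG]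

lemma norm_fibEmb_sq (y : Y) (F : CcSub Gp) :
    ‖fibEmb d y F‖ ^ 2 = ‖∫ h, conj (F.1 h) * F.1 h ∂(hs.lam y)‖ := by
  rw [fibEmb_apply, norm_fibMk, fibNormRep, Real.sq_sqrt (modIP_self_re_nonneg _ _),
    ← norm_modIP_self, d.emb_inner]
  rfl

lemma norm_fibEmb_translate {g : Gp.G} {F F' : CcSub Gp} (ht : IsTranslate g F.1 F'.1) :
    ‖fibEmb d (Gp.r g) F'‖ = ‖fibEmb d (Gp.s g) F‖ := by
  rw [← sq_eq_sq₀ (norm_nonneg _) (norm_nonneg _), norm_fibEmb_sq, norm_fibEmb_sq,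
    ht.integral_eq hs F'.2.1 F'.2.2]

lemma fibEmb_congr {y : Y} {F F' : CcSub Gp} (h : ∀ k, Gp.r k = y → F.1 k = F'.1 k) :
    fibEmb d y F = fibEmb d y F' := by
  rw [← sub_eq_zero, ← map_sub, ← norm_eq_zero, ← sq_eq_zero_iff, norm_fibEmb_sq, norm_eq_zero]
  refine (MeasureTheory.integral_congr_ae ?_).trans (MeasureTheory.integral_zero _ _)
  filter_upwards [hs.ae_r_eq y] with k hk
  have : (F - F').1 k = 0 := sub_eq_zero.2 (h k hk)
  rw [this, mul_zero]

/-- Translation along `g` as a linear map from `C_c(G)` to the fiber at `r(g)`. -/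
def preAct (g : Gp.G) : CcSub Gp →ₗ[ℂ] Fib Y PG (Gp.r g) where
  toFun F := fibEmb d (Gp.r g) (exists_translate_Cc g F).choose
  map_add' F F' := by
    rw [← map_add]
    refine fibEmb_congr d fun k hk => ?_
    have h1 := (exists_translate_Cc g F).choose_spec k hk
    have h2 := (exists_translate_Cc g F').choose_spec k hk
    have h3 := (exists_translate_Cc g (F + F')).choose_spec k hk
    exact h3.trans (congrArg₂ (· + ·) h1 h2).symm
  map_smul' c F := by
    rw [RingHom.id_apply, ← map_smul]
    refine fibEmb_congr d fun k hk => ?_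
    have h1 := (exists_translate_Cc g F).choose_spec k hk
    have h3 := (exists_translate_Cc g (c • F)).choose_spec k hk
    exact h3.trans (congrArg (c * ·) h1).symm

lemma preAct_eq {g : Gp.G} {F F' : CcSub Gp} (ht : IsTranslate g F.1 F'.1) :
    preAct d g F = fibEmb d (Gp.r g) F' :=
  fibEmb_congr d fun k hk =>
    ((exists_translate_Cc g F).choose_spec k hk).trans (ht k hk).symm

lemma norm_preAct (g : Gp.G) (F : CcSub Gp) : ‖preAct d g F‖ = ‖fibEmb d (Gp.s g) F‖ :=
  norm_fibEmb_translate d (exists_translate_Cc g F).choose_spec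

/-- The action of `g` on the fibers: the continuous extension of translation on `C_c(G)`. -/
def actL (g : Gp.G) : Fib Y PG (Gp.s g) →L[ℂ] Fib Y PG (Gp.r g) :=
  (preAct d g).extendOfNorm (fibEmb d (Gp.s g))

lemma actL_fibEmb {g : Gp.G} {F F' : CcSub Gp} (ht : IsTranslate g F.1 F'.1) :
    actL d g (fibEmb d (Gp.s g) F) = fibEmb d (Gp.r g) F' := by
  rw [← preAct_eq d ht]
  exact LinearMap.extendOfNorm_eq (denseRange_fibEmb d _)
    ⟨1, fun F => by rw [one_mul, norm_preAct]⟩ F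

lemma norm_actL (g : Gp.G) (v : Fib Y PG (Gp.s g)) : ‖actL d g v‖ = ‖v‖ := by
  refine (denseRange_fibEmb d (Gp.s g)).induction_on v
    (isClosed_eq (by fun_prop) (by fun_prop)) ?_
  intro F
  obtain ⟨F', hF'⟩ := exists_translate_Cc g F
  rw [actL_fibEmb d hF', norm_fibEmb_translate d hF']

lemma actL_surjective (g : Gp.G) : Function.Surjective (actL d g) := by
  have hi : Isometry (actL d g) := AddMonoidHomClass.isometry_of_norm _ (norm_actL d g)
  refine Set.range_eq_univ.1 (hi.isClosedEmbedding.isClosed_range.closure_eq.symm.trans ?_)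
  refine Set.eq_univ_of_univ_subset ?_
  rw [← (denseRange_fibEmb d (Gp.r g)).closure_range]
  refine closure_mono ?_
  rintro _ ⟨F', rfl⟩
  obtain ⟨F, hF⟩ := exists_translate_Cc (Gp.inv g) F'
  refine ⟨_, actL_fibEmb d (F := F) (F' := F') fun h hh => ?_⟩
  have e : Gp.s (Gp.inv g) = Gp.r h := (Gp.s_inv g).trans hh.symm
  have := hF.apply_mul (h := h) e.symm
  exact this.symm

lemma actL_unit (y : Y) (v : Fib Y PG y) :
    actL d (Gp.unit y) (fcast Y PG (Gp.s_unit y).symm v) = fcast Y PG (Gp.r_unit y).symm v := by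
  refine (denseRange_fibEmb d y).induction_on v
    (isClosed_eq ((actL d _).continuous.comp (continuous_fcast _)) (continuous_fcast _)) ?_
  intro F
  rw [fibEmb_apply, fcast_fibMk, fcast_fibMk, ← fibEmb_apply, ← fibEmb_apply]
  refine actL_fibEmb d fun h hh => ?_
  rw [Gp.r_unit] at hh
  rw [inv_unit, ← hh, Gp.unit_mul]

lemma actL_mul (g h : Gp.G) (hc : Gp.s g = Gp.r h) (v : Fib Y PG (Gp.s h)) :
    actL d (Gp.mul g h) (fcast Y PG (Gp.s_mul g h hc).symm v) =
      fcast Y PG (Gp.r_mul g h hc).symm (actL d g (fcast Y PG hc.symm (actL d h v))) := by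
  refine (denseRange_fibEmb d (Gp.s h)).induction_on v
    (isClosed_eq ((actL d _).continuous.comp (continuous_fcast _))
      ((continuous_fcast _).comp ((actL d _).continuous.comp
        ((continuous_fcast _).comp (actL d _).continuous)))) ?_
  intro F
  obtain ⟨F₁, hF₁⟩ := exists_translate_Cc h F
  obtain ⟨F₂, hF₂⟩ := exists_translate_Cc g F₁
  rw [actL_fibEmb d hF₁, fibEmb_apply, fibEmb_apply, fcast_fibMk, fcast_fibMk, ← fibEmb_apply,
    ← fibEmb_apply, actL_fibEmb d hF₂, fibEmb_apply _ _ F₂, fcast_fibMk, ← fibEmb_apply]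
  refine actL_fibEmb d fun k hk => ?_
  have hk' : Gp.r k = Gp.r g := hk.trans (Gp.r_mul g h hc)
  have e : Gp.s (Gp.inv g) = Gp.r k := (Gp.s_inv g).trans hk'.symm
  rw [hF₂ k hk', hF₁ _ ((Gp.r_mul _ _ e).trans ((Gp.r_inv g).trans hc)), inv_mul_rev _ _ hc,
    Gp.mul_assoc _ _ _ (by rw [Gp.s_inv, Gp.r_inv, hc]) e]

/-- Strong continuity of translation along the sections coming from `C_c(G)`. -/
lemma eventually_norm_actL_sub_lt {g₀ : Gp.G} {F F' : CcSub Gp} (ht : IsTranslate g₀ F.1 F'.1)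
    {ε : ℝ} (hε : 0 < ε) : ∀ᶠ g in 𝓝 g₀,
      ‖actL d g (fibEmb d (Gp.s g) F) - fibEmb d (Gp.r g) F'‖ < ε := by
  filter_upwards [eventually_integral_lt hs F.2.1 F.2.2 F'.2.1 F'.2.2 ht
    (pow_pos hε 2)] with g hg
  obtain ⟨Fg, hFg⟩ := exists_translate_Cc g F
  rw [actL_fibEmb d hFg, ← map_sub]
  refine lt_of_pow_lt_pow_left₀ 2 hε.le ?_
  rw [norm_fibEmb_sq]
  exact hg Fg.1 Fg.2.1 Fg.2.2 hFg

/-- The three-`ε` estimate behind continuity of the action: a bundle element `v` near `v₀` is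
compared with a section `F ∈ C_c(G)`, and the action on `F` near `g₀` with the section `F'` given by
the translate of `F` along `g₀`. -/
lemma exists_nhds_actL {g₀ : Gp.G} {v₀ : Fib Y PG (Gp.s g₀)} {p : PG} {ε : ℝ}
    (h : ‖actL d g₀ v₀ - fibMk Y PG (Gp.r g₀) p‖ < ε) :
    ∃ (q : PG) (η : ℝ), 0 < η ∧ ‖v₀ - fibMk Y PG (Gp.s g₀) q‖ < η ∧
      ∀ᶠ g in 𝓝 g₀, ∀ v : Fib Y PG (Gp.s g), ‖v - fibMk Y PG (Gp.s g) q‖ < η →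
        ‖actL d g v - fibMk Y PG (Gp.r g) p‖ < ε := by
  set η := (ε - ‖actL d g₀ v₀ - fibMk Y PG (Gp.r g₀) p‖) / 3 with hη
  have hη0 : 0 < η := by simp only [hη]; linarith
  obtain ⟨F, hF⟩ : ∃ F, ‖v₀ - fibEmb d (Gp.s g₀) F‖ < η := by
    obtain ⟨_, ⟨F, rfl⟩, hd⟩ := Metric.mem_closure_iff.1 (denseRange_fibEmb d (Gp.s g₀) v₀) η hη0
    exact ⟨F, by rwa [← dist_eq_norm]⟩
  obtain ⟨F', hF'⟩ := exists_translate_Cc g₀ F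
  refine ⟨d.emb (toCc F), η, hη0, hF, ?_⟩
  -- At `g₀`, the section `F'` is within `ε - 2η` of `p`; the same then holds nearby.
  have h1 : ‖fibMk Y PG (Gp.r g₀) (d.emb (toCc F') - p)‖ < ε - 2 * η := by
    have e : fibMk Y PG (Gp.r g₀) (d.emb (toCc F') - p)
        = (actL d g₀ v₀ - fibMk Y PG (Gp.r g₀) p)
          - actL d g₀ (v₀ - fibEmb d (Gp.s g₀) F) := by
      rw [map_sub, actL_fibEmb d hF', fibEmb_apply, sub_sub_sub_cancel_left]
      rfl
    rw [e]
    refine (norm_sub_le _ _).trans_lt ?_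
    rw [norm_actL]
    linarith
  have h2 : ∀ᶠ g in 𝓝 g₀, ‖fibMk Y PG (Gp.r g) (d.emb (toCc F') - p)‖ < ε - 2 * η := by
    simp only [norm_fibMk] at h1 ⊢
    exact ((continuous_fibNormRep _).comp Gp.r_cont).continuousAt.eventually_lt
      continuousAt_const h1
  filter_upwards [h2, eventually_norm_actL_sub_lt d hF' hη0] with g hg1 hg2 v hv
  have e : actL d g v - fibMk Y PG (Gp.r g) p
      = actL d g (v - fibEmb d (Gp.s g) F)
        + (actL d g (fibEmb d (Gp.s g) F) - fibEmb d (Gp.r g) F')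
        + fibMk Y PG (Gp.r g) (d.emb (toCc F') - p) := by
    have : fibMk Y PG (Gp.r g) (d.emb (toCc F') - p)
      = fibEmb d (Gp.r g) F' - fibMk Y PG (Gp.r g) p := rfl
    rw [this, map_sub]
    abel
  rw [e]
  refine (norm_add₃_le ..).trans_lt ?_
  rw [norm_actL]
  have hv' : ‖v - fibEmb d (Gp.s g) F‖ < η := hv
  linarith

lemma actL_continuous :
    @Continuous {q : Gp.G × TotalP Y PG // Gp.s q.1 = q.2.1} (TotalP Y PG)
    (@instTopologicalSpaceSubtype _ _ (@instTopologicalSpaceProd _ _ _ (topEP Y PG)))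
    (topEP Y PG)
    (fun q => ⟨Gp.r q.1.1, actL d q.1.1 (fcast Y PG q.2.symm q.1.2.2)⟩) := by
  let tE : TopologicalSpace (TotalP Y PG) := topEP Y PG
  have hfst : Continuous fun q : {q : Gp.G × TotalP Y PG // Gp.s q.1 = q.2.1} => q.1.1 :=
    continuous_fst.comp continuous_subtype_val
  have hsnd : Continuous fun q : {q : Gp.G × TotalP Y PG // Gp.s q.1 = q.2.1} => q.1.2 :=
    continuous_snd.comp continuous_subtype_val
  refine continuous_generateFrom_iff.2 ?_
  rintro _ ⟨U, p, ε, hU, hε, rfl⟩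
  simp only [fibNormQ_eq_norm]
  refine isOpen_iff_mem_nhds.2 ?_
  rintro ⟨⟨g₀, e₀⟩, he⟩ ⟨hgU, hlt⟩
  obtain ⟨q, η, hη, hq, hev⟩ := exists_nhds_actL d hlt
  have hO : IsOpen {e : TotalP Y PG | e.1 ∈ Set.univ ∧ ‖e.2 - fibMk Y PG e.1 q‖ < η} :=
    isOpen_basic isOpen_univ q hη
  have n1 := hfst.continuousAt.preimage_mem_nhds (x := ⟨⟨g₀, e₀⟩, he⟩) hev
  have n2 := (hU.preimage (Gp.r_cont.comp hfst)).mem_nhds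
    (x := ⟨⟨g₀, e₀⟩, he⟩) hgU
  have n3 := (hO.preimage hsnd).mem_nhds (x := ⟨⟨g₀, e₀⟩, he⟩)
    ⟨trivial, by rwa [← norm_fcast_sub he.symm]⟩
  filter_upwards [n1, n2, n3] with x hx1 hx2 hx3
  exact ⟨hx2, hx1 _ ((norm_fcast_sub _ _ _).trans_lt hx3.2)⟩

end Action

/-- **Proposition 2.6.**  The natural action of `G` on the Hilbert bundle
`L²(G) = E_{P_G}`, given by `(gξ)(h) = ξ(g⁻¹h)` for `ξ ∈ L²(G^{s(g)})` and
`h ∈ G^{r(g)}`, is continuous; hence `L²(G)` is a `G`-Hilbert bundle and `P_G` is a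
`G`-Hilbert module.  (The structure `GAction` comprises a continuous unitary left
groupoid action on the associated bundle, and `IsNaturalPGAction` pins it down as left
translation on the dense image of `C_c(G)`.) -/
theorem PG_is_G_hilbert_module
    (Y : Type) [TopologicalSpace Y] [T2Space Y] [LocallyCompactSpace Y]
    [SecondCountableTopology Y]
    (Gp : LCGroupoid Y) (hs : HaarSystem Y Gp)
    (PG : Type) [NormedAddCommGroup PG] [NormedSpace ℂ PG] [CompleteSpace PG]
    [SecondCountableTopology PG] [HilbertCzeroModule Y PG]
    (d : PGData Gp hs PG) :
    ∃ A : GAction Gp PG, IsNaturalPGAction d A := by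
  refine ⟨{
    act := fun g => actL d g
    act_add := fun g v w => map_add _ v w
    act_csmul := fun g c v => map_smul _ c v
    act_norm := fun g v => by rw [fibNormQ_eq_norm, fibNormQ_eq_norm, norm_actL]
    act_surjective := actL_surjective d
    act_unit := actL_unit d
    act_mul := actL_mul d
    act_cont := actL_continuous d }, fun g F F' h => ?_⟩
  exact actL_fibEmb d (F := ⟨F.1, F.2⟩) (F' := ⟨F'.1, F'.2⟩) h

end Stabilization
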